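/- arXiv:1304.3862 — 7 statements merged into one kernel-verified Lean document; each statement's English description precedes it below -/
import Mathlib

section
/- Let K ≥ 1 and L ≥ 1 be integers and let c_k be the sequence of polynomials defined by c_0 = 0, c_1 = 1 and c_{k+1}(z) = z·c_k(z) − c_{k−1}(z). Suppose z ∈ ℂ and Γ_0, Γ_1, …, Γ_L ∈ ℂ satisfy the recursion relations Γ_0·(z + K·Γ_0 + Γ_1) = −1, Γ_p·(z + Γ_{p+1}) = −1 for 1 ≤ p ≤ L−1, and Γ_L·(z + Γ_0) = −1. Then Γ_0 satisfies the cubic equation K·c_L(z)·Γ_0³ + (K+1)·c_{L+1}(z)·Γ_0² + z·c_{L+1}(z)·Γ_0 + c_{L+1}(z) = 0. -/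
/-- If `Γ_0, …, Γ_L` satisfy the Green's-function recursion relations
`Γ_0(z + KΓ_0 + Γ_1) = −1`, `Γ_p(z + Γ_{p+1}) = −1` for `1 ≤ p ≤ L−1`, and
`Γ_L(z + Γ_0) = −1`, then `Γ_0` satisfies the cubic
`K c_L(z) Γ_0³ + (K+1) c_{L+1}(z) Γ_0² + z c_{L+1}(z) Γ_0 + c_{L+1}(z) = 0`. -/
theorem stmt_6
    (c : ℕ → ℂ → ℂ)
    (hc0 : ∀ z : ℂ, c 0 z = 0)
    (hc1 : ∀ z : ℂ, c 1 z = 1)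
    (hrec : ∀ (k : ℕ) (z : ℂ), c (k + 2) z = z * c (k + 1) z - c k z)
    (K L : ℕ) (hK : 1 ≤ K) (hL : 1 ≤ L)
    (z : ℂ) (Γ : ℕ → ℂ)
    (h0 : Γ 0 * (z + (K : ℂ) * Γ 0 + Γ 1) = -1)
    (hp : ∀ p : ℕ, 1 ≤ p → p ≤ L - 1 → Γ p * (z + Γ (p + 1)) = -1)
    (hLrel : Γ L * (z + Γ 0) = -1) :
    (K : ℂ) * c L z * (Γ 0) ^ 3 + ((K : ℂ) + 1) * c (L + 1) z * (Γ 0) ^ 2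
      + z * c (L + 1) z * Γ 0 + c (L + 1) z = 0 := by
  have key : ∀ m p : ℕ, 1 ≤ p → p + m = L →
      Γ p * (c (m + 2) z + c (m + 1) z * Γ 0) = -(c (m + 1) z + c m z * Γ 0) := by
    intro m
    induction m with
    | zero =>
      intro p _ h
      have hpL : p = L := by omega
      subst hpL
      have h2 := hrec 0 z
      simp only [Nat.zero_add] at h2 ⊢
      rw [h2, hc1, hc0]
      linear_combination hLrel
    | succ m ih =>
      intro p h1 h
      have e1 := ih (p + 1) (by omega) (by omega)
      have e2 := hp p h1 (by omega)
      have r1 := hrec m z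
      have r2 := hrec (m + 1) z
      rw [show m + 1 + 2 = m + 3 from rfl] at r2 ⊢
      rw [show m + 1 + 1 = m + 2 from rfl] at r2 ⊢
      linear_combination (c (m + 2) z + c (m + 1) z * Γ 0) * e2 - Γ p * e1 + Γ p * r2
        + Γ p * Γ 0 * r1
  obtain ⟨m, rfl⟩ : ∃ m, L = m + 1 := ⟨L - 1, by omega⟩
  have e := key m 1 le_rfl (by omega)
  have r := hrec m z
  rw [show m + 1 + 1 = m + 2 from rfl]
  linear_combination (c (m + 2) z + c (m + 1) z * Γ 0) * h0 - Γ 0 * e + Γ 0 ^ 2 * r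
end

section
/- Let K ≥ 1 and L ≥ 1 be integers, let c_k be the sequence of polynomials defined by c_0 = 0, c_1 = 1 and c_{k+1}(z) = z·c_k(z) − c_{k−1}(z), and for E ∈ ℝ define D_{K,L}(E) = c_{L+1}(E)²·( 18K(K+1)E·c_L(E)·c_{L+1}(E) + (K+1)²E²·c_{L+1}(E)² − 4K·E³·c_L(E)·c_{L+1}(E) − 27K²·c_L(E)² − 4(K+1)³·c_{L+1}(E)² ). Then for every E ∈ ℝ, the equation K·c_L(E)·x³ + (K+1)·c_{L+1}(E)·x² + E·c_{L+1}(E)·x + c_{L+1}(E) = 0 has a solution x ∈ ℂ with Im(x) > 0 if and only if D_{K,L}(E) < 0. -/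
lemma quad_root (a p q : ℝ) (h : p ^ 2 - 4 * a * q < 0) :
    ∃ x : ℂ, (a : ℂ) * x ^ 2 + (p : ℂ) * x + (q : ℂ) = 0 ∧ 0 < x.im := by
  have ha : a ≠ 0 := by
    rintro rfl
    nlinarith [sq_nonneg p]
  have hpos : 0 < (4 * a * q - p ^ 2) / (4 * a ^ 2) := by
    apply div_pos
    · linarith
    · positivity
  set v := Real.sqrt ((4 * a * q - p ^ 2) / (4 * a ^ 2)) with hv
  have hv2 : v ^ 2 = (4 * a * q - p ^ 2) / (4 * a ^ 2) := Real.sq_sqrt hpos.le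
  refine ⟨⟨-p / (2 * a), v⟩, ?_, Real.sqrt_pos.mpr hpos⟩
  apply Complex.ext
  · have : a * ((-p / (2 * a)) ^ 2 - v ^ 2) + p * (-p / (2 * a)) + q = 0 := by
      rw [hv2]; field_simp; ring
    simp [pow_two]
    linarith
  · have : a * (2 * (-p / (2 * a)) * v) + p * v = 0 := by
      field_simp; ring
    simp [pow_two]
    linarith

lemma cubic_forward (a b c d : ℝ) (hab : a ≠ 0 ∨ b ≠ 0) (x : ℂ)
    (hx : (a : ℂ) * x ^ 3 + (b : ℂ) * x ^ 2 + (c : ℂ) * x + (d : ℂ) = 0) (him : 0 < x.im) :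
    18 * a * b * c * d - 4 * b ^ 3 * d + b ^ 2 * c ^ 2 - 4 * a * c ^ 3 - 27 * a ^ 2 * d ^ 2 < 0 := by
  obtain ⟨u, v⟩ := x
  have h1 := congrArg Complex.re hx
  have h2 := congrArg Complex.im hx
  simp [pow_succ] at h1 h2 him
  have hc : c = -(a * (3 * u ^ 2 - v ^ 2) + 2 * b * u) := by
    apply mul_right_cancel₀ him.ne'
    linarith
  have hd : d = -(a * (u ^ 3 - 3 * u * v ^ 2) + b * (u ^ 2 - v ^ 2) + c * u) := by
    linarith
  have key : 18 * a * b * c * d - 4 * b ^ 3 * d + b ^ 2 * c ^ 2 - 4 * a * c ^ 3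
      - 27 * a ^ 2 * d ^ 2 = -(4 * v ^ 2 * ((b + 3 * a * u) ^ 2 + a ^ 2 * v ^ 2) ^ 2) := by
    rw [hd, hc]; ring
  rw [key]
  have : 0 < (b + 3 * a * u) ^ 2 + a ^ 2 * v ^ 2 := by
    by_cases ha : a = 0
    · have hb : b ≠ 0 := by tauto
      subst ha
      have : 0 < b ^ 2 := by positivity
      simpa using this
    · positivity
  have : 0 < 4 * v ^ 2 * ((b + 3 * a * u) ^ 2 + a ^ 2 * v ^ 2) ^ 2 := by positivity
  linarith

lemma cubic_backward (a b c d : ℝ)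
    (h : 18 * a * b * c * d - 4 * b ^ 3 * d + b ^ 2 * c ^ 2 - 4 * a * c ^ 3
      - 27 * a ^ 2 * d ^ 2 < 0) :
    ∃ x : ℂ, (a : ℂ) * x ^ 3 + (b : ℂ) * x ^ 2 + (c : ℂ) * x + (d : ℂ) = 0 ∧ 0 < x.im := by
  by_cases ha : a = 0
  · subst ha
    have : c ^ 2 - 4 * b * d < 0 := by
      by_contra hn
      push Not at hn
      nlinarith [mul_nonneg (sq_nonneg b) hn]
    obtain ⟨x, hx, hi⟩ := quad_root b c d this
    exact ⟨x, by simpa using hx, hi⟩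
  · have hac : (a : ℂ) ≠ 0 := by exact_mod_cast ha
    obtain ⟨z, hz⟩ := IsAlgClosed.exists_root
      (Polynomial.C (a : ℂ) * Polynomial.X ^ 3 + Polynomial.C (b : ℂ) * Polynomial.X ^ 2
        + Polynomial.C (c : ℂ) * Polynomial.X + Polynomial.C (d : ℂ))
      (by rw [Polynomial.degree_cubic hac]; decide)
    have hz' : (a : ℂ) * z ^ 3 + (b : ℂ) * z ^ 2 + (c : ℂ) * z + (d : ℂ) = 0 := by
      simpa [Polynomial.IsRoot] using hz
    rcases lt_trichotomy z.im 0 with hi | hi | hi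
    · refine ⟨(starRingEnd ℂ) z, ?_, by simpa using hi⟩
      have := congrArg (starRingEnd ℂ) hz'
      simpa using this
    · obtain ⟨r, i⟩ := z
      simp only at hi
      subst hi
      have h1 := congrArg Complex.re hz'
      simp [pow_succ] at h1
      have hd : d = -(c + (b + a * r) * r) * r := by linarith
      have key : 18 * a * b * c * d - 4 * b ^ 3 * d + b ^ 2 * c ^ 2 - 4 * a * c ^ 3
          - 27 * a ^ 2 * d ^ 2 = ((b + a * r) ^ 2 - 4 * a * (c + (b + a * r) * r))
            * (a * r ^ 2 + (b + a * r) * r + (c + (b + a * r) * r)) ^ 2 := by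
        rw [hd]; ring
      have hq : (b + a * r) ^ 2 - 4 * a * (c + (b + a * r) * r) < 0 := by
        by_contra hn
        push Not at hn
        rw [key] at h
        exact absurd h (not_lt.mpr (mul_nonneg hn (sq_nonneg _)))
      obtain ⟨x, hx, hi⟩ := quad_root _ _ _ hq
      refine ⟨x, ?_, hi⟩
      rw [hd]
      push_cast at hx ⊢
      linear_combination (x - r) * hx
    · exact ⟨z, hz', hi⟩

/-- The cubic `K c_L(E) x³ + (K+1) c_{L+1}(E) x² + E c_{L+1}(E) x + c_{L+1}(E) = 0`
has a solution `x ∈ ℂ` with positive imaginary part iff the discriminant-type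
quantity `D_{K,L}(E)` is negative. -/
theorem stmt_7
    (c : ℕ → ℝ → ℝ)
    (hc0 : ∀ E : ℝ, c 0 E = 0)
    (hc1 : ∀ E : ℝ, c 1 E = 1)
    (hrec : ∀ (k : ℕ) (E : ℝ), c (k + 2) E = E * c (k + 1) E - c k E)
    (K L : ℕ) (hK : 1 ≤ K) (hL : 1 ≤ L)
    (D : ℝ → ℝ)
    (hD : ∀ E : ℝ, D E = (c (L + 1) E) ^ 2 *
      (18 * (K : ℝ) * ((K : ℝ) + 1) * E * c L E * c (L + 1) E
        + ((K : ℝ) + 1) ^ 2 * E ^ 2 * (c (L + 1) E) ^ 2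
        - 4 * (K : ℝ) * E ^ 3 * c L E * c (L + 1) E
        - 27 * (K : ℝ) ^ 2 * (c L E) ^ 2
        - 4 * ((K : ℝ) + 1) ^ 3 * (c (L + 1) E) ^ 2)) :
    ∀ E : ℝ,
      (∃ x : ℂ, (K : ℂ) * (c L E : ℂ) * x ^ 3 + ((K : ℂ) + 1) * (c (L + 1) E : ℂ) * x ^ 2
          + (E : ℂ) * (c (L + 1) E : ℂ) * x + (c (L + 1) E : ℂ) = 0 ∧ 0 < x.im)
        ↔ D E < 0 := by

  intro E
  have hcop : ∀ n : ℕ, c n E ≠ 0 ∨ c (n + 1) E ≠ 0 := by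
    intro n
    induction n with
    | zero => right; simp [hc1]
    | succ n ih =>
      by_contra hcon
      push Not at hcon
      obtain ⟨h1, h2⟩ := hcon
      have h3 := hrec n E
      rw [h1, h2] at h3
      have h4 : c n E = 0 := by linarith
      tauto
  have hKpos : (0 : ℝ) < K := by exact_mod_cast hK
  have hDE : D E = 18 * (K * c L E) * ((K + 1) * c (L + 1) E) * (E * c (L + 1) E) * c (L + 1) E
      - 4 * ((K + 1) * c (L + 1) E) ^ 3 * c (L + 1) E
      + ((K + 1) * c (L + 1) E) ^ 2 * (E * c (L + 1) E) ^ 2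
      - 4 * (K * c L E) * (E * c (L + 1) E) ^ 3
      - 27 * (K * c L E) ^ 2 * (c (L + 1) E) ^ 2 := by
    rw [hD]; ring
  rw [hDE]
  constructor
  · rintro ⟨x, hx, hi⟩
    refine cubic_forward _ _ _ _ ?_ x (by push_cast; exact hx) hi
    rcases hcop L with h | h
    · left; exact mul_ne_zero hKpos.ne' h
    · right; exact mul_ne_zero (by positivity) h
  · intro h
    obtain ⟨x, hx, hi⟩ := cubic_backward _ _ _ _ h
    exact ⟨x, by push_cast at hx; exact hx, hi⟩
end

section
/- For every integer L ≥ 1 and every real E_0 > 0 there exists K_0 such that for every integer K > K_0, the interval [−E_0, E_0] is contained in the closure of the set { E ∈ ℝ : D_{K,L}(E) < 0 }, where D_{K,L}(E) = c_{L+1}(E)²·( 18K(K+1)E·c_L(E)·c_{L+1}(E) + (K+1)²E²·c_{L+1}(E)² − 4K·E³·c_L(E)·c_{L+1}(E) − 27K²·c_L(E)² − 4(K+1)³·c_{L+1}(E)² ). -/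
/-- For every `L ≥ 1` and `E₀ > 0` there is `K₀` such that for all
integers `K > K₀`, `[−E₀, E₀]` is contained in the closure of `{E : D_{K,L}(E) < 0}`. -/
theorem stmt_9
    (c : ℕ → ℝ → ℝ)
    (hc0 : ∀ E : ℝ, c 0 E = 0)
    (hc1 : ∀ E : ℝ, c 1 E = 1)
    (hrec : ∀ (k : ℕ) (E : ℝ), c (k + 2) E = E * c (k + 1) E - c k E)
    (D : ℕ → ℕ → ℝ → ℝ)
    (hD : ∀ (K L : ℕ) (E : ℝ), D K L E = (c (L + 1) E) ^ 2 *
      (18 * (K : ℝ) * ((K : ℝ) + 1) * E * c L E * c (L + 1) E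
        + ((K : ℝ) + 1) ^ 2 * E ^ 2 * (c (L + 1) E) ^ 2
        - 4 * (K : ℝ) * E ^ 3 * c L E * c (L + 1) E
        - 27 * (K : ℝ) ^ 2 * (c L E) ^ 2
        - 4 * ((K : ℝ) + 1) ^ 3 * (c (L + 1) E) ^ 2)) :
    ∀ L : ℕ, 1 ≤ L → ∀ E₀ : ℝ, 0 < E₀ →
      ∃ K₀ : ℕ, ∀ K : ℕ, K₀ < K →
        Set.Icc (-E₀) E₀ ⊆ closure {E : ℝ | D K L E < 0} := by
  intro L _ E₀ hE₀
  obtain ⟨p, hp, -⟩ : ∃ p : Polynomial ℝ, (∀ E, p.eval E = c (L + 1) E) ∧ True := by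
    have key : ∀ k : ℕ, (∃ p : Polynomial ℝ, ∀ E, p.eval E = c k E) ∧
        (∃ p : Polynomial ℝ, ∀ E, p.eval E = c (k + 1) E) := by
      intro k
      induction k with
      | zero => exact ⟨⟨0, by simp [hc0]⟩, ⟨1, by simp [hc1]⟩⟩
      | succ k ih =>
        obtain ⟨⟨p, hp⟩, ⟨q, hq⟩⟩ := ih
        exact ⟨⟨q, hq⟩, ⟨Polynomial.X * q - p, by intro E; simp [hp, hq, hrec]⟩⟩
    obtain ⟨p, hp⟩ := (key L).2
    exact ⟨p, hp, trivial⟩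
  have h2 : ∀ k : ℕ, c k 2 = k ∧ c (k + 1) 2 = k + 1 := by
    intro k
    induction k with
    | zero => simp [hc0, hc1]
    | succ k ih =>
      refine ⟨by rw [ih.2]; push_cast; ring, ?_⟩
      rw [hrec, ih.1, ih.2]; push_cast; ring
  have hp0 : p ≠ 0 := by
    rintro rfl
    have h := hp 2
    rw [(h2 L).2, Polynomial.eval_zero] at h
    have : (0 : ℝ) < (L : ℝ) + 1 := by positivity
    linarith
  have hfin : {E : ℝ | c (L + 1) E = 0}.Finite := by
    refine (Polynomial.finite_setOfPred_isRoot hp0).subset ?_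
    intro E hE
    simpa [Polynomial.IsRoot, hp] using hE
  have hdense : Dense ({E : ℝ | c (L + 1) E = 0}ᶜ) := Set.Countable.dense_compl ℝ (Set.Finite.countable hfin)
  refine ⟨⌈(E₀ + 1) ^ 2⌉₊, fun K hK x hx => ?_⟩
  have hKT : (E₀ + 1) ^ 2 < (K : ℝ) := (Nat.le_ceil _).trans_lt (by exact_mod_cast hK)
  have hxU : x ∈ Set.Ioo (-(E₀ + 1)) (E₀ + 1) := ⟨by linarith [hx.1], by linarith [hx.2]⟩
  refine closure_mono ?_ (hdense.open_subset_closure_inter isOpen_Ioo hxU)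
  rintro E ⟨hE, hb⟩
  have hb : c (L + 1) E ≠ 0 := hb
  have ht : E ^ 2 ≤ (E₀ + 1) ^ 2 := sq_le_sq' hE.1.le hE.2.le
  change D K L E < 0
  rw [hD]
  refine mul_neg_of_pos_of_neg (by positivity) ?_
  generalize c (L + 1) E = b at *
  generalize c L E = a
  generalize (K : ℝ) = k at *
  have ht0 := sq_nonneg E
  have htk : E ^ 2 < k + 1 := by linarith
  obtain ⟨X, rfl⟩ : ∃ X, k = X - 1 := ⟨k + 1, by ring⟩
  have hX : 0 < X := by linarith
  have htX : E ^ 2 < X := by linarith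
  have hs : (18 * X - 4 * E ^ 2) ^ 2 ≤ (18 * X) ^ 2 := sq_le_sq' (by linarith) (by linarith)
  have hs2 : E ^ 2 * (18 * X - 4 * E ^ 2) ^ 2 ≤ E ^ 2 * (18 * X) ^ 2 :=
    mul_le_mul_of_nonneg_left hs ht0
  have hs3 : E ^ 2 * X ^ 2 < X * X ^ 2 := mul_lt_mul_of_pos_right htX (by positivity)
  have hneg : E ^ 2 * (18 * X - 4 * E ^ 2) ^ 2 / 108 + X ^ 2 * E ^ 2 - 4 * X ^ 3 < 0 := by
    nlinarith
  have hb2 : 0 < b ^ 2 := by positivity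
  have h3 := mul_neg_of_neg_of_pos hneg hb2
  have h4 := sq_nonneg ((X - 1) * a - E * (18 * X - 4 * E ^ 2) / 54 * b)
  nlinarith
end

section
/- Let K ≥ 1 and L ≥ 1 be integers and let S^{K,L} be the (L+1)×(L+1) matrix with rows and columns indexed by 0,…,L whose entries are S_{0,0} = K, S_{p,p+1} = 1 for 0 ≤ p ≤ L−1, S_{L,0} = 1, and all other entries 0. Then for all x_0, x_1, …, x_L ∈ ℂ, det( 𝟙_{L+1} − diag(x_0, …, x_L)·S^{K,L} ) = 1 − K·x_0 − x_0·x_1⋯x_L. -/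
/-- For the substitution matrix `S^{K,L}` one has
`det(𝟙 − diag(x₀,…,x_L)·S^{K,L}) = 1 − K·x₀ − x₀x₁⋯x_L`. -/
theorem stmt_11
    (K L : ℕ) (hK : 1 ≤ K) (hL : 1 ≤ L)
    (S : Matrix (Fin (L + 1)) (Fin (L + 1)) ℂ)
    (hS : ∀ p q : Fin (L + 1), S p q =
      (if (p : ℕ) = 0 ∧ (q : ℕ) = 0 then (K : ℂ) else 0)
      + (if (q : ℕ) = (p : ℕ) + 1 then 1 else 0)
      + (if (p : ℕ) = L ∧ (q : ℕ) = 0 then 1 else 0)) :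
    ∀ x : Fin (L + 1) → ℂ,
      (1 - Matrix.diagonal x * S).det = 1 - (K : ℂ) * x 0 - ∏ p, x p := by
  intro x
  obtain ⟨n, rfl⟩ : ∃ n, L = n + 1 := ⟨L - 1, by omega⟩
  have hM : ∀ p q, (1 - Matrix.diagonal x * S) p q = (if p = q then 1 else 0) - x p * S p q := by
    intro p q
    rw [Matrix.sub_apply, Matrix.diagonal_mul, Matrix.one_apply]
  generalize (1 - Matrix.diagonal x * S) = M at hM
  have h0 : (M.submatrix (Fin.succAbove 0) Fin.succ).det = 1 := by
    rw [Matrix.det_of_upperTriangular]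
    · apply Finset.prod_eq_one
      intro i _
      simp [hM, hS]
    · intro i j hij
      have hij' : (j : ℕ) < i := hij
      have h1 : i ≠ j := by rintro rfl; omega
      have h2 : ¬ ((j : ℕ) = i + 1) := by omega
      simp [hM, hS, h1, h2]
  have h1 : (M.submatrix (Fin.succAbove (Fin.last (n + 1))) Fin.succ).det
      = ∏ p : Fin (n + 1), (- x p.castSucc) := by
    rw [Matrix.det_of_lowerTriangular]
    · apply Finset.prod_congr rfl
      intro i _
      have h1 : i.castSucc ≠ i.succ := by simp [Fin.ext_iff]
      simp [hM, hS, h1]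
    · intro i j hij
      have hij' : (i : ℕ) < j := hij
      have h1 : i.castSucc ≠ j.succ := by simp [Fin.ext_iff]; omega
      have h2 : ¬ ((j : ℕ) = i) := by omega
      simp [hM, hS, h1, h2]
  have e0 : M 0 0 = 1 - K * x 0 := by
    simp [hM, hS]; ring
  have eL : M (Fin.last (n + 1)) 0 = - x (Fin.last (n + 1)) := by
    simp [hM, hS, Fin.ext_iff]
  rw [Matrix.det_succ_column_zero, Fin.sum_univ_succ, Fin.sum_univ_castSucc, Fin.succ_last,
    h0, h1, e0, eL, Finset.sum_eq_zero, Finset.prod_neg, Fin.prod_univ_castSucc (f := x)]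
  · have h2 : ((-1 : ℂ) ^ (n + 1)) * (-1) ^ (n + 1) = 1 := by
      rw [← mul_pow]; simp
    simp only [Finset.card_univ, Fintype.card_fin, Fin.val_last, Fin.val_zero, pow_zero, Nat.succ_eq_add_one]
    linear_combination (-x (Fin.last (n + 1)) * ∏ p : Fin (n + 1), x p.castSucc) * h2
  · intro i _
    have : M i.castSucc.succ 0 = 0 := by
      have := i.isLt
      have h3 : ¬ ((i : ℕ) = n) := by omega
      simp [hM, hS, h3]
    rw [this]; ring
end

section
/- Let k ≥ 1 and let D be a complex symmetric k×k matrix whose real part (the real symmetric matrix Re D) is positive definite. Then for every v ∈ ℂ^k the integral I(v) = ∫_{ℝ^k} exp( −(1/2)·Σ_{i,j} (x+v)_i·D_{ij}·(x+v)_j ) dx converges absolutely, is independent of v, and satisfies I(v)²·det(D) = (2π)^k. -/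
open MeasureTheory

open scoped Matrix MatrixOrder ComplexOrder in
lemma aux_simul {k : ℕ} (A B : Matrix (Fin k) (Fin k) ℝ) (hA : A.PosDef) (hB : B.IsSymm) :
    ∃ (P : Matrix (Fin k) (Fin k) ℝ) (β : Fin k → ℝ), P.det ≠ 0 ∧ Pᵀ * A * P = 1 ∧
      Pᵀ * B * P = Matrix.diagonal β := by
  obtain ⟨S, hS, hAS⟩ := CStarAlgebra.isStrictlyPositive_iff_eq_star_mul_self.mp
        hA.isStrictlyPositive
  rw [Matrix.star_eq_conjTranspose, Matrix.conjTranspose_eq_transpose_of_trivial] at hAS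
  have hSd : IsUnit S.det := (Matrix.isUnit_iff_isUnit_det S).1 hS
  have hM : ((S⁻¹)ᵀ * B * S⁻¹).IsHermitian := by
    unfold Matrix.IsHermitian
    rw [Matrix.conjTranspose_eq_transpose_of_trivial]
    simp only [Matrix.transpose_mul, Matrix.transpose_transpose, hB.eq, Matrix.mul_assoc]
  have h1 := hM.conjStarAlgAut_star_eigenvectorUnitary
  rw [Unitary.conjStarAlgAut_apply] at h1
  set U : Matrix (Fin k) (Fin k) ℝ := (hM.eigenvectorUnitary : Matrix (Fin k) (Fin k) ℝ) with hU
  have hUU : Uᵀ * U = 1 := by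
    have := (Unitary.mem_iff.1 hM.eigenvectorUnitary.2).1
    rwa [Matrix.star_eq_conjTranspose, Matrix.conjTranspose_eq_transpose_of_trivial] at this
  simp only [Unitary.coe_star, star_star, ← hU] at h1
  rw [Matrix.star_eq_conjTranspose, Matrix.conjTranspose_eq_transpose_of_trivial] at h1
  have hSi : S * S⁻¹ = 1 := Matrix.mul_nonsing_inv S hSd
  have hSi2 : (S⁻¹)ᵀ * Sᵀ = 1 := by rw [← Matrix.transpose_mul, hSi, Matrix.transpose_one]
  have hUd : U.det ≠ 0 := by
    intro h
    have := congrArg Matrix.det hUU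
    simp [h] at this
  refine ⟨S⁻¹ * U, hM.eigenvalues, ?_, ?_, ?_⟩
  · rw [Matrix.det_mul]
    refine mul_ne_zero ?_ hUd
    intro h
    have := congrArg Matrix.det hSi
    simp [-Matrix.det_nonsing_inv, h] at this
  · rw [hAS, Matrix.transpose_mul]
    calc Uᵀ * (S⁻¹)ᵀ * (Sᵀ * S) * (S⁻¹ * U) = Uᵀ * ((S⁻¹)ᵀ * Sᵀ) * (S * S⁻¹) * U := by
          simp only [Matrix.mul_assoc]
      _ = 1 := by rw [hSi, hSi2, Matrix.mul_one, Matrix.mul_one, hUU]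
  · rw [Matrix.transpose_mul]
    simp only [Matrix.mul_assoc] at h1 ⊢
    rw [h1]
    congr 1

lemma aux_diag {k : ℕ} (b w : Fin k → ℂ) (hb : ∀ i, 0 < (b i).re) :
    Integrable (fun y : Fin k → ℝ => Complex.exp (-(1 / 2) * ∑ i, b i * ((y i : ℂ) + w i) ^ 2)) ∧
    ∫ y : Fin k → ℝ, Complex.exp (-(1 / 2) * ∑ i, b i * ((y i : ℂ) + w i) ^ 2) =
      ∏ i, ((Real.pi : ℂ) / (b i / 2)) ^ (1 / 2 : ℂ) := by
  have hb2 : ∀ i, 0 < (b i / 2).re := fun i => by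
    have := hb i
    simp only [Complex.div_ofNat_re]; linarith
  have hb0 : ∀ i, b i ≠ 0 := fun i h => by have := hb i; simp [h] at this
  have key : ∀ y : Fin k → ℝ, Complex.exp (-(1 / 2) * ∑ i, b i * ((y i : ℂ) + w i) ^ 2) =
      Complex.exp (-∑ i, b i / 2 * (y i : ℂ) ^ 2 + ∑ i, (-(b i * w i)) * y i) *
        ∏ i, Complex.exp (-(b i * w i ^ 2 / 2)) := by
    intro y
    rw [← Complex.exp_sum, ← Complex.exp_add, ← Finset.sum_neg_distrib, ← Finset.sum_add_distrib,
      ← Finset.sum_add_distrib, Finset.mul_sum]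
    congr 1
    refine Finset.sum_congr rfl fun i _ => ?_
    ring
  simp_rw [key]
  refine ⟨(GaussianFourier.integrable_cexp_neg_sum_mul_add hb2 _).mul_const _, ?_⟩
  rw [integral_mul_const, GaussianFourier.integral_cexp_neg_sum_mul_add hb2,
    ← Finset.prod_mul_distrib]
  refine Finset.prod_congr rfl fun i _ => ?_
  rw [mul_assoc, ← Complex.exp_add]
  have : (-(b i * w i)) ^ 2 / (4 * (b i / 2)) + -(b i * w i ^ 2 / 2) = 0 := by
    have := hb0 i
    field_simp
    ring
  rw [this]; simp

open scoped Matrix in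
lemma aux_quad {k : ℕ} (D : Matrix (Fin k) (Fin k) ℂ) (u : Fin k → ℂ) :
    ∑ i, ∑ j, u i * D i j * u j = u ⬝ᵥ (D *ᵥ u) := by
  simp only [dotProduct, Matrix.mulVec, Finset.mul_sum, mul_assoc]

open scoped Matrix in
lemma aux_main {k : ℕ} (D : Matrix (Fin k) (Fin k) ℂ) (hsymm : D.IsSymm)
    (hre : (Matrix.of fun i j => (D i j).re : Matrix (Fin k) (Fin k) ℝ).PosDef) :
    ∃ c : ℂ, c ^ 2 * D.det = ((2 * Real.pi : ℝ) : ℂ) ^ k ∧ ∀ v : Fin k → ℂ,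
      Integrable (fun x : Fin k → ℝ =>
        Complex.exp (-(1 / 2) * ∑ i, ∑ j, ((x i : ℂ) + v i) * D i j * ((x j : ℂ) + v j))) ∧
      ∫ x : Fin k → ℝ,
        Complex.exp (-(1 / 2) * ∑ i, ∑ j, ((x i : ℂ) + v i) * D i j * ((x j : ℂ) + v j)) = c := by
  set A : Matrix (Fin k) (Fin k) ℝ := Matrix.of fun i j => (D i j).re with hA
  set B : Matrix (Fin k) (Fin k) ℝ := Matrix.of fun i j => (D i j).im with hB
  have hBs : B.IsSymm := by
    ext i j
    simp [hB, Matrix.transpose_apply, hsymm.apply i j]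
  obtain ⟨P, β, hP, hPA, hPB⟩ := aux_simul A B hre hBs
  set Q : Matrix (Fin k) (Fin k) ℂ := P.map Complex.ofRealHom with hQ
  have hD : D = A.map Complex.ofRealHom + Complex.I • B.map Complex.ofRealHom := by
    ext i j
    simp only [hA, hB, Matrix.add_apply, Matrix.smul_apply, Matrix.map_apply, Matrix.of_apply,
      smul_eq_mul, Complex.ofRealHom_eq_coe]
    rw [mul_comm, Complex.re_add_im]
  set b : Fin k → ℂ := fun i => 1 + Complex.I * β i with hb
  have hbre : ∀ i, 0 < (b i).re := fun i => by simp [hb]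
  have hb0 : ∀ i, b i ≠ 0 := fun i h => by have := hbre i; simp [h] at this
  have hQD : Qᵀ * D * Q = Matrix.diagonal b := by
    have e1 : Qᵀ * A.map Complex.ofRealHom * Q = 1 := by
      rw [hQ, ← Matrix.transpose_map, ← Matrix.map_mul, ← Matrix.map_mul, hPA]
      simp
    have e2 : Qᵀ * B.map Complex.ofRealHom * Q = Matrix.diagonal fun i => (β i : ℂ) := by
      rw [hQ, ← Matrix.transpose_map, ← Matrix.map_mul, ← Matrix.map_mul, hPB]
      simp [Matrix.diagonal_map, Function.comp_def]
    rw [hD, Matrix.mul_add, Matrix.add_mul, e1, Matrix.mul_smul, Matrix.smul_mul, e2,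
      ← Matrix.diagonal_one, ← Matrix.diagonal_smul, Matrix.diagonal_add]
    rfl
  have hQdet : Q.det = (P.det : ℂ) := by
    rw [hQ]; exact (RingHom.map_det Complex.ofRealHom P).symm
  have hPc : (P.det : ℂ) ≠ 0 := by exact_mod_cast hP
  have hQu : IsUnit Q.det := by rw [hQdet]; exact hPc.isUnit
  have hdet : (P.det : ℂ) ^ 2 * D.det = ∏ i, b i := by
    have := congrArg Matrix.det hQD
    rw [Matrix.det_mul, Matrix.det_mul, Matrix.det_transpose, Matrix.det_diagonal, hQdet] at this
    rw [← this]; ring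
  refine ⟨((|P.det| : ℝ) : ℂ) * ∏ i, ((Real.pi : ℂ) / (b i / 2)) ^ (1 / 2 : ℂ), ?_, ?_⟩
  · have h1 : (((|P.det| : ℝ) : ℂ)) ^ 2 = (P.det : ℂ) ^ 2 := by
      exact_mod_cast congrArg (fun r : ℝ => (r : ℂ)) (sq_abs P.det)
    rw [mul_pow, h1, mul_right_comm, hdet, ← Finset.prod_pow, ← Finset.prod_mul_distrib]
    rw [Finset.prod_congr rfl (g := fun _ => ((2 * Real.pi : ℝ) : ℂ))]
    · simp
    · intro i _
      rw [← Complex.cpow_nat_mul]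
      have := hb0 i
      norm_num
      field_simp
  · intro v
    set w : Fin k → ℂ := Q⁻¹ *ᵥ v with hw
    have hv : Q *ᵥ w = v := by
      rw [hw, Matrix.mulVec_mulVec, Matrix.mul_nonsing_inv _ hQu, Matrix.one_mulVec]
    set F : (Fin k → ℝ) → ℂ := fun x =>
      Complex.exp (-(1 / 2) * ∑ i, ∑ j, ((x i : ℂ) + v i) * D i j * ((x j : ℂ) + v j)) with hF
    have hFc : Continuous F := by
      rw [hF]; fun_prop
    have hFP : ∀ y : Fin k → ℝ, F (Matrix.toLin' P y) =
        Complex.exp (-(1 / 2) * ∑ i, b i * ((y i : ℂ) + w i) ^ 2) := by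
      intro y
      set z : Fin k → ℂ := fun i => (y i : ℂ) + w i with hz
      have hx : (fun i => ((Matrix.toLin' P y i : ℝ) : ℂ) + v i) = Q *ᵥ z := by
        have : z = (fun i => (y i : ℂ)) + w := rfl
        rw [this, Matrix.mulVec_add, hv]
        ext i
        simp [Matrix.mulVec, dotProduct, hQ]
      have h2 := aux_quad D (fun i => ((Matrix.toLin' P y i : ℝ) : ℂ) + v i)
      simp only [hF]
      rw [h2, hx]
      congr 2
      rw [Matrix.mulVec_mulVec, ← Matrix.vecMul_transpose, ← Matrix.dotProduct_mulVec,
        Matrix.mulVec_mulVec, ← Matrix.mul_assoc, hQD]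
      simp only [dotProduct, Matrix.mulVec_diagonal]
      refine Finset.sum_congr rfl fun i _ => ?_
      simp only [hz]; ring
    obtain ⟨hi, hint⟩ := aux_diag b w hbre
    have hmap := Real.map_matrix_volume_pi_eq_smul_volume_pi hP
    have hLm : AEMeasurable (Matrix.toLin' P) (volume : Measure (Fin k → ℝ)) :=
      (LinearMap.continuous_of_finiteDimensional _).aemeasurable
    have hpos : 0 < |(P.det)⁻¹| := abs_pos.2 (inv_ne_zero hP)
    constructor
    · have h3 := (integrable_map_measure (g := F) hFc.aestronglyMeasurable hLm).2
        (by simpa only [Function.comp_def, hFP] using hi)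
      rw [hmap] at h3
      exact (integrable_smul_measure (by simpa using hP) ENNReal.ofReal_ne_top).1 h3
    · have h3 := integral_map (f := F) hLm hFc.aestronglyMeasurable
      simp_rw [hFP] at h3
      rw [hint, hmap, integral_smul_measure, ENNReal.toReal_ofReal hpos.le] at h3
      rw [← h3, Complex.real_smul, ← mul_assoc, ← Complex.ofReal_mul, abs_inv,
        mul_inv_cancel₀ (abs_ne_zero.2 hP)]
      simp

/-- For a complex symmetric matrix `D` with positive definite real
part, the Gaussian integral `I(v) = ∫ exp(−(1/2)(x+v)·D(x+v)) dx` converges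
absolutely, is independent of `v`, and satisfies `I(v)²·det(D) = (2π)^k`. -/
theorem stmt_15
    (k : ℕ) (hk : 1 ≤ k)
    (D : Matrix (Fin k) (Fin k) ℂ) (hsymm : D.IsSymm)
    (hre : (Matrix.of fun i j => (D i j).re : Matrix (Fin k) (Fin k) ℝ).PosDef)
    (I : (Fin k → ℂ) → ℂ)
    (hI : ∀ v : Fin k → ℂ, I v = ∫ x : Fin k → ℝ,
      Complex.exp (-(1 / 2) * ∑ i, ∑ j, ((x i : ℂ) + v i) * D i j * ((x j : ℂ) + v j))) :
    (∀ v : Fin k → ℂ, Integrable (fun x : Fin k → ℝ =>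
      Complex.exp (-(1 / 2) * ∑ i, ∑ j, ((x i : ℂ) + v i) * D i j * ((x j : ℂ) + v j)))) ∧
    (∀ v w : Fin k → ℂ, I v = I w) ∧
    (∀ v : Fin k → ℂ, (I v) ^ 2 * D.det = ((2 * Real.pi : ℝ) : ℂ) ^ k) := by
  obtain ⟨c, hc, h⟩ := aux_main D hsymm hre
  have hIc : ∀ v, I v = c := fun v => by rw [hI v, (h v).2]
  refine ⟨fun v => (h v).1, fun v w => by rw [hIc, hIc], fun v => by rw [hIc, hc]⟩
end

section
/- Let k ≥ 1 and let D be a real symmetric k×k matrix. For j ≥ 1 let 𝒟_j be the jk×jk block tridiagonal matrix with k×k blocks, having −D in each diagonal block and the k×k identity in each block directly above and below the diagonal (so 𝒟_1 = −D). Define recursively D_1 = −D^{−1} (when D is invertible) and D_{j+1} = −(D + D_j)^{−1} (when D + D_j is invertible). Then for every L ≥ 1 the following are equivalent: (a) D is invertible and the matrices D_1, …, D_L are all well defined (i.e., D + D_{j−1} is invertible for 2 ≤ j ≤ L); (b) the matrices 𝒟_1, …, 𝒟_L are all invertible. -/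
/-- Chebyshev-like polynomials in `D`. -/
noncomputable def chebV {k : ℕ} (D : Matrix (Fin k) (Fin k) ℝ) : ℕ → Matrix (Fin k) (Fin k) ℝ
  | 0 => 0
  | 1 => 1
  | (n + 2) => D * chebV D (n + 1) - chebV D n

lemma chebV_comm {k : ℕ} (D : Matrix (Fin k) (Fin k) ℝ) (n : ℕ) :
    Commute D (chebV D n) := by
  induction n using Nat.strong_induction_on with
  | _ n ih =>
    match n with
    | 0 => exact Commute.zero_right _
    | 1 => exact Commute.one_right _
    | (n + 2) =>
      rw [chebV]
      exact ((Commute.refl D).mul_right (ih (n + 1) (by omega))).sub_right (ih n (by omega))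

lemma row_formula {k : ℕ} (D : Matrix (Fin k) (Fin k) ℝ) (j : ℕ)
    (M : Matrix (Fin j × Fin k) (Fin j × Fin k) ℝ)
    (hM : ∀ (a b : Fin j × Fin k), M a b =
      if a.1 = b.1 then -D a.2 b.2
      else if (a.1 : ℕ) + 1 = (b.1 : ℕ) ∨ (b.1 : ℕ) + 1 = (a.1 : ℕ) then
        (if a.2 = b.2 then 1 else 0)
      else 0)
    (y : ℕ → Fin k → ℝ) (y0 : y 0 = 0) (yj : y (j + 1) = 0) (i : Fin j) (a : Fin k) :
    (M.mulVec (fun p => y ((p.1 : ℕ) + 1) p.2)) (i, a) =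
      -(D.mulVec (y ((i : ℕ) + 1))) a + y ((i : ℕ) + 2) a + y (i : ℕ) a := by
  obtain ⟨i, hi⟩ := i
  simp only [Matrix.mulVec, dotProduct, Fintype.sum_prod_type, hM]
  have key : ∀ c : Fin j, (∑ b : Fin k, (if (⟨i, hi⟩ : Fin j) = c then -D a b
      else if i + 1 = (c : ℕ) ∨ (c : ℕ) + 1 = i then (if a = b then (1 : ℝ) else 0)
      else 0) * y ((c : ℕ) + 1) b) =
      (fun n : ℕ => (if i = n then -(∑ b, D a b * y (i + 1) b) else 0)
        + (if i + 1 = n then y (i + 2) a else 0)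
        + (if n + 1 = i then y i a else 0)) (c : ℕ) := by
    rintro ⟨c, hc⟩
    simp only [Fin.mk.injEq]
    by_cases h1 : i = c
    · subst h1
      simp
    · by_cases h2 : i + 1 = c
      · subst h2
        simp
        omega
      · by_cases h3 : c + 1 = i
        · subst h3
          simp
          omega
        · simp [h1, h2, h3]
  rw [Finset.sum_congr rfl (fun c _ => key c)]
  rw [Fin.sum_univ_eq_sum_range (fun n : ℕ => (if i = n then -(∑ b, D a b * y (i + 1) b) else 0)
        + (if i + 1 = n then y (i + 2) a else 0)
        + (if n + 1 = i then y i a else 0)) j]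
  rw [Finset.sum_add_distrib, Finset.sum_add_distrib]
  have e1 : (∑ n ∈ Finset.range j, if i = n then -(∑ b, D a b * y (i + 1) b) else 0)
      = -(∑ b, D a b * y (i + 1) b) := by
    rw [Finset.sum_ite_eq]; simp [hi]
  have e2 : (∑ n ∈ Finset.range j, if i + 1 = n then y (i + 2) a else 0) = y (i + 2) a := by
    rw [Finset.sum_ite_eq]
    by_cases h : i + 1 < j
    · simp [h]
    · have : i + 2 = j + 1 := by omega
      simp [h, this, yj]
  have e3 : (∑ n ∈ Finset.range j, if n + 1 = i then y i a else 0) = y i a := by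
    cases i with
    | zero => simp [y0]
    | succ m =>
      simp only [Nat.add_right_cancel_iff]
      rw [Finset.sum_ite_eq']
      simp [show m < j by omega]
  rw [e1, e2, e3]

lemma det_iff {k : ℕ} (D : Matrix (Fin k) (Fin k) ℝ) (j : ℕ) (hj : 1 ≤ j)
    (M : Matrix (Fin j × Fin k) (Fin j × Fin k) ℝ)
    (hM : ∀ (a b : Fin j × Fin k), M a b =
      if a.1 = b.1 then -D a.2 b.2
      else if (a.1 : ℕ) + 1 = (b.1 : ℕ) ∨ (b.1 : ℕ) + 1 = (a.1 : ℕ) then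
        (if a.2 = b.2 then 1 else 0)
      else 0) :
    IsUnit M.det ↔ IsUnit (chebV D (j + 1)).det := by
  rw [isUnit_iff_ne_zero, isUnit_iff_ne_zero, not_iff_not,
    ← Matrix.exists_mulVec_eq_zero_iff, ← Matrix.exists_mulVec_eq_zero_iff]
  constructor
  · rintro ⟨v, hv, h⟩
    let y : ℕ → Fin k → ℝ := fun n a => match n with
      | 0 => 0
      | (n + 1) => if h : n < j then v (⟨n, h⟩, a) else 0
    have y0 : y 0 = 0 := rfl
    have yj : y (j + 1) = 0 := by ext a; simp [y]
    have hvy : v = fun p => y ((p.1 : ℕ) + 1) p.2 := by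
      ext ⟨c, b⟩; simp [y]
    have hy : ∀ n, n ≤ j → y n = (chebV D n).mulVec (y 1) ∧
        y (n + 1) = (chebV D (n + 1)).mulVec (y 1) := by
      intro n
      induction n with
      | zero => intro _; simp [chebV, y0]
      | succ n ih =>
        intro hn
        obtain ⟨h1, h2⟩ := ih (by omega)
        refine ⟨h2, ?_⟩
        rw [chebV, Matrix.sub_mulVec, ← Matrix.mulVec_mulVec, ← h1, ← h2]
        ext a
        have := row_formula D j M hM y y0 yj ⟨n, hn⟩ a
        rw [← hvy, h] at this
        simp only [Pi.zero_apply] at this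
        simp only [Pi.sub_apply]
        linarith
    refine ⟨y 1, ?_, ?_⟩
    · intro h0
      apply hv
      rw [hvy]
      ext ⟨c, b⟩
      simp only
      rw [(hy c c.2.le).2, h0]
      simp
    · rw [← (hy j le_rfl).2, yj]
  · rintro ⟨w, hw, h⟩
    refine ⟨fun p => (chebV D ((p.1 : ℕ) + 1)).mulVec w p.2, ?_, ?_⟩
    · intro h0
      apply hw
      ext a
      have := congrFun h0 (⟨0, hj⟩, a)
      simpa [chebV] using this
    · ext ⟨c, b⟩
      have := row_formula D j M hM (fun n => (chebV D n).mulVec w) (by simp [chebV]) h c b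
      rw [this]
      simp only [chebV, Matrix.sub_mulVec, ← Matrix.mulVec_mulVec, Pi.sub_apply, Pi.zero_apply]
      ring

lemma step {k : ℕ} (D A B : Matrix (Fin k) (Fin k) ℝ) (hA : Commute D A)
    (hu : IsUnit A.det) : D + -(A⁻¹ * B) = A⁻¹ * (D * A - B) := by
  rw [hA.eq, mul_sub, Matrix.nonsing_inv_mul_cancel_left _ _ hu, sub_eq_add_neg]

/-- For a real symmetric `k×k` matrix `D`, the recursively defined
matrices `D_1 = −D⁻¹`, `D_{j+1} = −(D + D_j)⁻¹` are all well defined up to index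
`L` (i.e. `D` is invertible and each `D + D_j`, `1 ≤ j < L`, is invertible) if
and only if the block tridiagonal matrices `𝒟_1, …, 𝒟_L` (with `−D` on the
diagonal blocks and `𝟙` on the adjacent off-diagonal blocks) are all invertible. -/
theorem stmt_17
    (k : ℕ) (hk : 1 ≤ k)
    (D : Matrix (Fin k) (Fin k) ℝ) (hsymm : D.IsSymm)
    (𝓓 : (j : ℕ) → Matrix (Fin j × Fin k) (Fin j × Fin k) ℝ)
    (h𝓓 : ∀ (j : ℕ) (a b : Fin j × Fin k), 𝓓 j a b =
      if a.1 = b.1 then -D a.2 b.2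
      else if (a.1 : ℕ) + 1 = (b.1 : ℕ) ∨ (b.1 : ℕ) + 1 = (a.1 : ℕ) then
        (if a.2 = b.2 then 1 else 0)
      else 0)
    (Dseq : ℕ → Matrix (Fin k) (Fin k) ℝ)
    (hD1 : Dseq 1 = -D⁻¹)
    (hDrec : ∀ j : ℕ, 1 ≤ j → Dseq (j + 1) = -(D + Dseq j)⁻¹) :
    ∀ L : ℕ, 1 ≤ L →
      ((IsUnit D.det ∧ ∀ j : ℕ, 1 ≤ j → j < L → IsUnit (D + Dseq j).det) ↔
        (∀ j : ℕ, 1 ≤ j → j ≤ L → IsUnit (𝓓 j).det)) := by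
  have hdet : ∀ j, 1 ≤ j → (IsUnit (𝓓 j).det ↔ IsUnit (chebV D (j + 1)).det) :=
    fun j hj => det_iff D j hj (𝓓 j) (h𝓓 j)
  have h2 : chebV D 2 = D := by simp [chebV]
  -- one step, given that the sequence has the closed form
  have hstep : ∀ j, IsUnit (chebV D (j + 1)).det →
      Dseq j = -((chebV D (j + 1))⁻¹ * chebV D j) →
      D + Dseq j = (chebV D (j + 1))⁻¹ * chebV D (j + 2) := by
    intro j hu hj
    rw [hj, step D _ _ (chebV_comm D (j + 1)) hu, chebV]
  have hform : ∀ j, 1 ≤ j → (∀ i, 1 ≤ i → i ≤ j → IsUnit (chebV D (i + 1)).det) →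
      Dseq j = -((chebV D (j + 1))⁻¹ * chebV D j) := by
    intro j hj
    induction j, hj using Nat.le_induction with
    | base => intro _; simp [hD1, chebV]
    | succ j hj ih =>
      intro hu
      have hj' := ih (fun i h1 h2 => hu i h1 (by omega))
      rw [hDrec j hj, hstep j (hu j hj (by omega)) hj', Matrix.mul_inv_rev,
        Matrix.nonsing_inv_nonsing_inv _ (hu j hj (by omega))]
  have hunit : ∀ j, 1 ≤ j → (∀ i, 1 ≤ i → i ≤ j → IsUnit (chebV D (i + 1)).det) →
      (IsUnit (D + Dseq j).det ↔ IsUnit (chebV D (j + 2)).det) := by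
    intro j hj hu
    rw [hstep j (hu j hj le_rfl) (hform j hj hu), Matrix.det_mul, IsUnit.mul_iff]
    have := Matrix.isUnit_nonsing_inv_det _ (hu j hj le_rfl)
    tauto
  intro L hL
  have hR : (∀ j : ℕ, 1 ≤ j → j ≤ L → IsUnit (𝓓 j).det) ↔
      (∀ j : ℕ, 1 ≤ j → j ≤ L → IsUnit (chebV D (j + 1)).det) :=
    forall_congr' fun j => forall_congr' fun hj => by rw [hdet j hj]
  rw [hR]
  constructor
  · rintro ⟨hD, h⟩ j hj
    induction j using Nat.strong_induction_on with
    | _ j ih =>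
      intro hjL
      rcases Nat.lt_or_ge 1 j with h1 | h1
      · obtain ⟨m, rfl⟩ : ∃ m, j = m + 1 := ⟨j - 1, by omega⟩
        exact (hunit m (by omega) (fun i hi him => ih i (by omega) hi (by omega))).1
          (h m (by omega) (by omega))
      · obtain rfl : j = 1 := by omega
        rwa [h2]
  · intro h
    refine ⟨?_, ?_⟩
    · have := h 1 le_rfl hL
      rwa [h2] at this
    · intro j hj hjL
      exact (hunit j hj (fun i hi hij => h i hi (by omega))).2 (h (j + 1) (by omega) (by omega))
end

section
/- Let k ≥ 1 and let h_1, h_2 : ℝ^k → ℂ be continuous functions with exponential decay, i.e., there exist C > 0 and c > 0 such that |h_i(x)| ≤ C·e^{−c‖x‖} for i = 1, 2 and all x ∈ ℝ^k. Then for every p ∈ [1, ∞], the linear map sending f ∈ L²(ℝ^k) to the function x ↦ h_1(x)·( 𝓕(h_2·f) )(x) is well defined and compact as an operator from L²(ℝ^k) to L^p(ℝ^k). -/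
open MeasureTheory
open scoped ENNReal Topology

noncomputable def PhiOp {α : Type*} [MeasurableSpace α] (μ : Measure α) (H : Type*)
    [NormedAddCommGroup H] [NormedSpace ℂ H] (p : ℝ≥0∞) [Fact (1 ≤ p)] :
    Lp (H →L[ℂ] ℂ) p μ →L[ℂ] H →L[ℂ] Lp ℂ p μ :=
  (ContinuousLinearMap.compLpL₂ p μ (ContinuousLinearMap.apply ℂ ℂ : H →L[ℂ] (H →L[ℂ] ℂ) →L[ℂ] ℂ)).flip

section
variable {α : Type*} [MeasurableSpace α] {μ : Measure α} {H : Type*}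
    [NormedAddCommGroup H] [NormedSpace ℂ H] {p : ℝ≥0∞} [Fact (1 ≤ p)]

theorem PhiOp_ae (g : Lp (H →L[ℂ] ℂ) p μ) (f : H) :
    PhiOp μ H p g f =ᵐ[μ] fun a => g a f := by
  have := ContinuousLinearMap.coeFn_compLp' (p := p) (μ := μ) (ContinuousLinearMap.apply ℂ ℂ f : (H →L[ℂ] ℂ) →L[ℂ] ℂ) g
  simpa [PhiOp] using this

theorem PhiOp_indicator (c : H →L[ℂ] ℂ) {s : Set α}
    (h1 : MemLp (s.indicator fun _ => (1:ℂ)) p μ) (g : Lp (H →L[ℂ] ℂ) p μ)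
    (hg : g =ᵐ[μ] s.indicator fun _ => c) :
    IsCompactOperator (PhiOp μ H p g) := by
  have hid : IsCompactOperator (id : ℂ → ℂ) :=
    isCompactOperator_id_iff_locallyCompactSpace.2 inferInstance
  have h2 := (hid.comp_clm c).clm_comp (ContinuousLinearMap.toSpanSingleton ℂ (h1.toLp _))
  suffices he : ⇑(PhiOp μ H p g) =
      ⇑(ContinuousLinearMap.toSpanSingleton ℂ (h1.toLp _)) ∘ id ∘ ⇑c by
    rw [he]; exact h2
  funext f
  simp only [Function.comp, id]
  apply Lp.ext
  rw [ContinuousLinearMap.toSpanSingleton_apply]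
  filter_upwards [PhiOp_ae g f, hg, Lp.coeFn_smul (c f) (h1.toLp _), h1.coeFn_toLp] with a h1 h2 h3 h4
  rw [h1, h2, h3, Pi.smul_apply, h4]
  by_cases ha : a ∈ s <;> simp [ha]

theorem PhiOp_closed : IsClosed {g : Lp (H →L[ℂ] ℂ) p μ | IsCompactOperator (PhiOp μ H p g)} :=
  (isClosed_setOfPred_isCompactOperator (σ₁₂ := RingHom.id ℂ) (M₁ := H) (M₂ := Lp ℂ p μ)).preimage
    (PhiOp μ H p).continuous

theorem PhiOp_compact_ne_top (hp : p ≠ ∞) (g : Lp (H →L[ℂ] ℂ) p μ) :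
    IsCompactOperator (PhiOp μ H p g) := by
  induction g using Lp.induction hp with
  | indicatorConst c hs hμs =>
    refine PhiOp_indicator c (memLp_indicator_const p hs 1 (Or.inr hμs.ne)) _ ?_
    rw [Lp.simpleFunc.coe_indicatorConst]
    exact indicatorConstLp_coeFn
  | add hf hg _ h1 h2 =>
    rw [map_add]
    exact h1.add h2
  | isClosed => exact PhiOp_closed

theorem PhiOp_compact_simple (φ : SimpleFunc α (H →L[ℂ] ℂ)) (h : MemLp φ ∞ μ) :
    IsCompactOperator (PhiOp μ H ∞ (h.toLp φ)) := by
  have hm : ∀ φ : SimpleFunc α (H →L[ℂ] ℂ), MemLp φ ∞ μ := fun φ => φ.memLp_top μ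
  induction φ using SimpleFunc.induction with
  | @const c s hs =>
    refine PhiOp_indicator c ((memLp_top_const (1 : ℂ)).indicator hs) _ ?_
    refine (MemLp.coeFn_toLp _).trans ?_
    simp only [SimpleFunc.coe_piecewise, SimpleFunc.coe_const]
    refine Filter.Eventually.of_forall fun a => ?_
    by_cases ha : a ∈ s <;> simp [ha]
  | add _ h1 h2 =>
    rename_i f g _
    have := (h1 (hm f)).add (h2 (hm g))
    rw [← FunLike.coe_add, ← map_add, ← MemLp.toLp_add] at this
    exact this

theorem PhiOp_compact_top (g : α → H →L[ℂ] ℂ) (hg : Measurable g)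
    (hgm : MemLp g ∞ μ)
    (htb : ∀ ε > 0, ∃ t : Set (H →L[ℂ] ℂ), t.Finite ∧ ∀ a, ∃ c ∈ t, dist (g a) c ≤ ε) :
    IsCompactOperator (PhiOp μ H ∞ (hgm.toLp g)) := by
  have := (PhiOp_closed (μ := μ) (H := H) (p := ∞)).closure_eq
  change hgm.toLp g ∈ {g : Lp (H →L[ℂ] ℂ) ∞ μ | IsCompactOperator (PhiOp μ H ∞ g)}
  rw [← this, Metric.mem_closure_iff]
  intro ε hε
  obtain ⟨t, ht, hnet⟩ := htb (ε / 2) (by positivity)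
  let l := ht.toFinset.toList
  let e : ℕ → (H →L[ℂ] ℂ) := fun n => l.getD n 0
  let φ := (SimpleFunc.nearestPt e l.length).comp g hg
  have hφ : MemLp φ ∞ μ := φ.memLp_top μ
  refine ⟨hφ.toLp φ, PhiOp_compact_simple φ hφ, ?_⟩
  have key : ∀ a, ‖g a - φ a‖ ≤ ε / 2 := by
    intro a
    obtain ⟨c, hc, hd⟩ := hnet a
    have hc' : c ∈ l := by simpa [l] using hc
    obtain ⟨n, hn, rfl⟩ := List.mem_iff_getElem.1 hc'
    have h1 := SimpleFunc.edist_nearestPt_le e (g a) hn.le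
    rw [edist_dist, edist_dist, ENNReal.ofReal_le_ofReal_iff dist_nonneg] at h1
    rw [← dist_eq_norm, dist_comm]
    refine h1.trans ?_
    rw [dist_comm]
    simpa [e, hn] using hd
  rw [dist_eq_norm, ← MemLp.toLp_sub, Lp.norm_toLp]
  refine lt_of_le_of_lt (ENNReal.toReal_le_of_le_ofReal (b := ε / 2) (by positivity) ?_) (half_lt_self hε)
  rw [eLpNorm_exponent_top]
  exact eLpNormEssSup_le_of_ae_bound (Filter.Eventually.of_forall key)
end

section
variable {k : ℕ}


theorem integrable_exp_decay {c : ℝ} (hc : 0 < c) :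
    Integrable (fun x : EuclideanSpace ℝ (Fin k) => Real.exp (-c * ‖x‖)) volume := by
  have h := integrable_one_add_norm (E := EuclideanSpace ℝ (Fin k)) (μ := volume) (r := ((k + 1 : ℕ) : ℝ))
    (by simp)
  refine (h.const_mul ((k + 1).factorial * Real.exp c / c ^ (k + 1))).mono'
    (by fun_prop) (Filter.Eventually.of_forall fun x => ?_)
  have h1 := Real.pow_div_factorial_le_exp (c * (1 + ‖x‖)) (by positivity) (k + 1)
  rw [Real.norm_eq_abs, abs_of_pos (Real.exp_pos _), Real.rpow_neg (by positivity),
    Real.rpow_natCast]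
  have h2 : Real.exp (-c * ‖x‖) = Real.exp c * (Real.exp (c * (1 + ‖x‖)))⁻¹ := by
    rw [← Real.exp_neg, ← Real.exp_add]; ring_nf
  have h3 : (Real.exp (c * (1 + ‖x‖)))⁻¹ ≤ ((c * (1 + ‖x‖)) ^ (k + 1) / (k + 1).factorial)⁻¹ :=
    inv_anti₀ (by positivity) h1
  rw [h2]
  refine (mul_le_mul_of_nonneg_left h3 (Real.exp_pos _).le).trans (le_of_eq ?_)
  rw [mul_pow]
  field_simp

theorem memLp_exp_decay {c : ℝ} (hc : 0 < c) (p : ℝ≥0∞) :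
    MemLp (fun x : EuclideanSpace ℝ (Fin k) => Real.exp (-c * ‖x‖)) p volume := by
  have hm : AEStronglyMeasurable (fun x : EuclideanSpace ℝ (Fin k) => Real.exp (-c * ‖x‖)) volume := by fun_prop
  rcases eq_or_ne p 0 with rfl | h0
  · exact memLp_zero_iff_aestronglyMeasurable.2 hm
  rcases eq_or_ne p ∞ with rfl | ht
  · refine memLp_top_of_bound hm 1 (Filter.Eventually.of_forall fun x => ?_)
    rw [Real.norm_eq_abs, abs_of_pos (Real.exp_pos _), Real.exp_le_one_iff]
    nlinarith [norm_nonneg x]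
  · rw [← integrable_norm_rpow_iff hm h0 ht]
    have := integrable_exp_decay (k := k) (c := c * p.toReal) (mul_pos hc (ENNReal.toReal_pos h0 ht))
    refine this.congr (Filter.Eventually.of_forall fun x => ?_)
    simp only [Real.norm_eq_abs, abs_of_pos (Real.exp_pos _)]
    rw [← Real.exp_mul]; ring_nf

theorem memLp_of_exp_decay {F : Type*} [NormedAddCommGroup F] {g : (EuclideanSpace ℝ (Fin k)) → F}
    (hg : AEStronglyMeasurable g volume) {C c : ℝ} (hc : 0 < c)
    (hb : ∀ x, ‖g x‖ ≤ C * Real.exp (-c * ‖x‖)) (p : ℝ≥0∞) : MemLp g p volume :=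
  (memLp_exp_decay hc p).of_le_mul (c := C) hg (Filter.Eventually.of_forall fun x => by
    rw [Real.norm_eq_abs, abs_of_pos (Real.exp_pos _)]; exact hb x)

theorem norm_mul_exp_le {c t : ℝ} (hc : 0 < c) :
    t * Real.exp (-c * t) ≤ (2 / c) * Real.exp (-(c / 2) * t) := by
  have h := Real.add_one_le_exp (c / 2 * t)
  have h2 : Real.exp (-(c / 2) * t) = Real.exp (c / 2 * t) * Real.exp (-c * t) := by
    rw [← Real.exp_add]; ring_nf
  rw [h2, ← mul_assoc]
  refine mul_le_mul_of_nonneg_right ?_ (Real.exp_pos _).le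
  rw [div_mul_eq_mul_div, le_div_iff₀ hc]
  linarith

/-- the conjugated kernel -/
noncomputable def ker (h₂ : (EuclideanSpace ℝ (Fin k)) → ℂ) (x w : EuclideanSpace ℝ (Fin k)) : ℂ :=
  starRingEnd ℂ (Complex.exp (-Complex.I * ∑ i, (x i : ℂ) * (w i : ℂ)) * h₂ w)

theorem exp_eq (x w : EuclideanSpace ℝ (Fin k)) : Complex.exp (-Complex.I * ∑ i, (x i : ℂ) * (w i : ℂ)) =
    Complex.exp (Complex.I * ((-inner ℝ w x : ℝ) : ℂ)) := by
  congr 1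
  rw [PiLp.inner_apply]
  simp

theorem norm_exp_sub_exp (a b : ℝ) :
    ‖Complex.exp (Complex.I * a) - Complex.exp (Complex.I * b)‖ ≤ |a - b| := by
  have : Complex.exp (Complex.I * a) - Complex.exp (Complex.I * b) =
      Complex.exp (Complex.I * b) * (Complex.exp (Complex.I * ((a - b : ℝ) : ℂ)) - 1) := by
    rw [mul_sub, ← Complex.exp_add]; push_cast; ring_nf
  rw [this, norm_mul, mul_comm Complex.I (b : ℂ), Complex.norm_exp_ofReal_mul_I, one_mul]
  exact Real.norm_exp_I_mul_ofReal_sub_one_le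

theorem norm_ker (h₂ : (EuclideanSpace ℝ (Fin k)) → ℂ) (x w : EuclideanSpace ℝ (Fin k)) : ‖ker h₂ x w‖ = ‖h₂ w‖ := by
  rw [ker, exp_eq, RCLike.norm_conj, norm_mul, mul_comm Complex.I, Complex.norm_exp_ofReal_mul_I,
    one_mul]

theorem norm_ker_sub (h₂ : (EuclideanSpace ℝ (Fin k)) → ℂ) (x y w : EuclideanSpace ℝ (Fin k)) :
    ‖ker h₂ x w - ker h₂ y w‖ ≤ ‖x - y‖ * (‖w‖ * ‖h₂ w‖) := by
  rw [ker, ker, ← map_sub, RCLike.norm_conj, ← sub_mul, norm_mul, exp_eq, exp_eq, ← mul_assoc]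
  refine mul_le_mul_of_nonneg_right ((norm_exp_sub_exp _ _).trans ?_) (norm_nonneg _)
  have h : -inner ℝ w x - -inner ℝ w y = -inner ℝ w (x - y) := by rw [inner_sub_right]; ring
  rw [h, abs_neg, mul_comm]
  exact abs_real_inner_le_norm _ _

theorem ker_cont {h₂ : (EuclideanSpace ℝ (Fin k)) → ℂ} (h : Continuous h₂) (x : EuclideanSpace ℝ (Fin k)) : Continuous (ker h₂ x) := by
  unfold ker
  fun_prop

end

set_option maxHeartbeats 1000000 in
/-- For continuous exponentially decaying `h₁, h₂` on `ℝ^k`, the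
operator `f ↦ h₁ · 𝓕(h₂ · f)` is well defined and compact from `L²(ℝ^k)` to
`L^p(ℝ^k)` for every `p ∈ [1, ∞]`.  (The hypothesis `1 ≤ p` is recorded as a
`Fact` so that the `L^p` norm topology is available.) -/
theorem stmt_18
    (k : ℕ) (hk : 1 ≤ k)
    (h₁ h₂ : EuclideanSpace ℝ (Fin k) → ℂ)
    (hcont₁ : Continuous h₁) (hcont₂ : Continuous h₂)
    (hdecay : ∃ C > (0 : ℝ), ∃ c > (0 : ℝ), ∀ x : EuclideanSpace ℝ (Fin k),
      ‖h₁ x‖ ≤ C * Real.exp (-c * ‖x‖) ∧ ‖h₂ x‖ ≤ C * Real.exp (-c * ‖x‖))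
    (F : (EuclideanSpace ℝ (Fin k) → ℂ) → EuclideanSpace ℝ (Fin k) → ℂ)
    (hF : ∀ (g : EuclideanSpace ℝ (Fin k) → ℂ) (x : EuclideanSpace ℝ (Fin k)),
      F g x = (((2 * Real.pi) ^ (-(k : ℝ) / 2) : ℝ) : ℂ) *
        ∫ w : EuclideanSpace ℝ (Fin k),
          Complex.exp (-Complex.I * ∑ i, (x i : ℂ) * (w i : ℂ)) * g w) :
    ∀ (p : ENNReal) [Fact (1 ≤ p)],
      ∃ T : Lp ℂ 2 (volume : Measure (EuclideanSpace ℝ (Fin k))) →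
            Lp ℂ p (volume : Measure (EuclideanSpace ℝ (Fin k))),
        IsLinearMap ℂ T ∧ IsCompactOperator T ∧
        ∀ f : Lp ℂ 2 (volume : Measure (EuclideanSpace ℝ (Fin k))),
          (T f : EuclideanSpace ℝ (Fin k) → ℂ) =ᵐ[volume]
            fun x => h₁ x * F (fun w => h₂ w * (f : EuclideanSpace ℝ (Fin k) → ℂ) w) x := by
  obtain ⟨C, hC, c, hc, hd⟩ := hdecay
  intro p hp
  set K : ℂ := (((2 * Real.pi) ^ (-(k : ℝ) / 2) : ℝ) : ℂ) with hK
  -- the kernel as an L² valued map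
  have hmem : ∀ x, MemLp (ker h₂ x) 2 volume := fun x =>
    memLp_of_exp_decay (ker_cont hcont₂ x).aestronglyMeasurable hc
      (fun w => by rw [norm_ker]; exact (hd w).2) 2
  let v : EuclideanSpace ℝ (Fin k) → Lp ℂ 2 (volume : Measure (EuclideanSpace ℝ (Fin k))) :=
    fun x => (hmem x).toLp _
  have hm2 : MemLp h₂ 2 volume :=
    memLp_of_exp_decay hcont₂.aestronglyMeasurable hc (fun w => (hd w).2) 2
  have hmw : MemLp (fun w : EuclideanSpace ℝ (Fin k) => ‖w‖ * ‖h₂ w‖) 2 volume := by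
    refine memLp_of_exp_decay (C := C * (2 / c)) (c := c / 2)
      (by fun_prop) (by positivity) (fun w => ?_) 2
    rw [norm_mul, norm_norm, norm_norm]
    calc ‖w‖ * ‖h₂ w‖ ≤ ‖w‖ * (C * Real.exp (-c * ‖w‖)) := by
          gcongr; exact (hd w).2
      _ = C * (‖w‖ * Real.exp (-c * ‖w‖)) := by ring
      _ ≤ C * ((2 / c) * Real.exp (-(c / 2) * ‖w‖)) := by
          exact mul_le_mul_of_nonneg_left (norm_mul_exp_le hc) hC.le
      _ = _ := by ring
  have hvb : ∀ x, ‖v x‖ ≤ ‖hm2.toLp _‖ := by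
    intro x
    refine Lp.norm_le_norm_of_ae_le ?_
    filter_upwards [(hmem x).coeFn_toLp, hm2.coeFn_toLp] with w e1 e2
    rw [e1, e2, norm_ker]
  have hvl : ∀ x y, ‖v x - v y‖ ≤ ‖x - y‖ * ‖hmw.toLp _‖ := by
    intro x y
    refine Lp.norm_le_mul_norm_of_ae_le_mul ?_
    filter_upwards [(hmem x).coeFn_toLp, (hmem y).coeFn_toLp, hmw.coeFn_toLp,
      Lp.coeFn_sub (v x) (v y)] with w e1 e2 e3 e4
    rw [e4, Pi.sub_apply, e1, e2, e3, Real.norm_of_nonneg (by positivity)]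
    exact norm_ker_sub h₂ x y w
  have hvc : Continuous v := by
    refine (LipschitzWith.of_dist_le_mul (K := ‖hmw.toLp _‖₊) fun x y => ?_).continuous
    rw [dist_eq_norm, dist_eq_norm, mul_comm]
    exact hvl x y
  let g : EuclideanSpace ℝ (Fin k) →
      (Lp ℂ 2 (volume : Measure (EuclideanSpace ℝ (Fin k))) →L[ℂ] ℂ) :=
    fun x => (h₁ x * K) • innerSL ℂ (v x)
  have hgc : Continuous g :=
    (hcont₁.mul continuous_const).smul ((innerSL ℂ).continuous.comp hvc)
  have hgb : ∀ x, ‖g x‖ ≤ (C * ‖K‖ * ‖hm2.toLp _‖) * Real.exp (-c * ‖x‖) := by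
    intro x
    simp only [g]
    rw [norm_smul, norm_mul, innerSL_apply_norm]
    calc ‖h₁ x‖ * ‖K‖ * ‖v x‖ ≤ (C * Real.exp (-c * ‖x‖)) * ‖K‖ * ‖hm2.toLp _‖ := by
          gcongr
          · exact (hd x).1
          · exact hvb x
      _ = _ := by ring
  have hgm : MemLp g p volume := memLp_of_exp_decay hgc.aestronglyMeasurable hc hgb p
  refine ⟨fun f => PhiOp volume _ p (hgm.toLp g) f,
    ⟨fun a b => map_add _ a b, fun a b => map_smul _ a b⟩, ?_, ?_⟩
  · rcases eq_or_ne p ∞ with rfl | hpt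
    · refine PhiOp_compact_top g hgc.measurable hgm fun ε hε => ?_
      have hlim : Filter.Tendsto (fun t : ℝ => (C * ‖K‖ * ‖hm2.toLp _‖) * Real.exp (-c * t))
          Filter.atTop (𝓝 0) := by
        have h1 : Filter.Tendsto (fun t : ℝ => Real.exp (-c * t)) Filter.atTop (𝓝 0) :=
          Real.tendsto_exp_atBot.comp
            (Filter.tendsto_id.const_mul_atTop_of_neg (neg_lt_zero.2 hc))
        simpa using h1.const_mul (C * ‖K‖ * ‖hm2.toLp _‖)
      obtain ⟨R, hR⟩ := Filter.eventually_atTop.1 (hlim.eventually (gt_mem_nhds hε))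
      obtain ⟨t, -, htf, hcov⟩ := Metric.totallyBounded_iff.1
        (((isCompact_closedBall (0 : EuclideanSpace ℝ (Fin k)) R).image hgc).totallyBounded)
        ε hε |>.imp fun t ht => (⟨trivial, ht.1, ht.2⟩ : True ∧ _ ∧ _)
      refine ⟨insert 0 t, htf.insert 0, fun a => ?_⟩
      by_cases ha : ‖a‖ ≤ R
      · have : g a ∈ g '' Metric.closedBall 0 R := ⟨a, by simpa using ha, rfl⟩
        obtain ⟨b, hb, hab⟩ := Set.mem_iUnion₂.1 (hcov this)
        exact ⟨b, Set.mem_insert_of_mem _ hb, (Metric.mem_ball.1 hab).le⟩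
      · refine ⟨0, Set.mem_insert _ _, ?_⟩
        rw [dist_zero_right]
        exact (hgb a).trans (hR _ (not_le.1 ha).le).le
    · exact PhiOp_compact_ne_top hpt _
  · intro f
    filter_upwards [PhiOp_ae (hgm.toLp g) f, hgm.coeFn_toLp] with x e1 e2
    rw [e1, e2, hF]
    simp only [g]
    rw [smul_apply, innerSL_apply_apply, L2.inner_def, smul_eq_mul, mul_assoc]
    congr 2
    refine integral_congr_ae ?_
    filter_upwards [(hmem x).coeFn_toLp] with w e3
    rw [e3, RCLike.inner_apply, ker, Complex.conj_conj]
    ring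
end
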